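/- For every n ≥ 1, every ε > 0, every continuous map φ from the unit sphere S^{n−1} (the boundary of the closed unit ball Bⁿ in Euclidean n-space, which is homeomorphic to the boundary of an n-simplex) into T(I), and every compact set C ⊆ T(I) containing φ(S^{n−1}), there exists a continuous extension Φ : Bⁿ → T(I) of φ such that for every set A with φ(S^{n−1}) ⊆ A ⊆ C one has diam(Φ(Bⁿ) ∪ A) ≤ (1+ε)·diam A, where diameters are taken with respect to the supremum metric. -/

import Mathlib

/-!
The key observation is that one may fill the sphere by maps lying in a *band*. If
`m z = min_u φ u z` and `M z = max_u φ u z`, then any map with values in the `δ`-neighbourhood of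
the intervals `[m z, M z]` is within `diam A + δ` of every element of `A ⊇ range φ`, because the
distance from a number to the points of an interval is largest at an endpoint; and two such maps
are within `diam A + 2δ` of each other. If `φ` is not constant, `δ = ε * diam (range φ) / 2` will
do; if it is constant, so is the extension.

There is much room for transitive maps in a band. A rapid oscillation between two Lipschitz
envelopes `p < q` (a triangle wave, folded back into `[0, 1]` by reflection at the end points) is
expanding, so short intervals grow until they contain a full period. If in addition
`p ≤ f - a` and `f + a ≤ q` for some transitive map `f`, then the image of an interval longer than
a period contains a neighbourhood of its image under `f`, of a size that allows this to be
repeated. The forward orbit of the interval under the oscillation therefore contains its forward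
orbit under `f`, and transitivity is inherited from `f`
(`isTransitiveMap_of_shadow`, `isTransitiveMap_of_zig`).

For `x` in the ball, with radial projection `u`, the envelopes start from `P x = Q x = φ u` on the
boundary, open up linearly, and equal `m` and `M` for `‖x‖ ≤ 1 / 2`, where they no longer depend on
`u`; always `P x ≤ φ u ≤ Q x`. Infimal convolution makes them Lipschitz with a constant that blows
up like `1 / (1 - ‖x‖)`, while the extra room `a` tends to `0` like `1 - ‖x‖`. The frequency of the
oscillation is a continuous function of these two parameters, so the resulting family is
continuous in the open ball, and at the boundary it is squeezed between envelopes which both tend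
to `φ u` (`exists_transitive_in_band`, `exists_filling`).
-/

open unitInterval

/-- A continuous self-map of the unit interval is (topologically) transitive if for every pair
of nonempty open sets `U, V ⊆ I` there is a positive integer `n` with `U ∩ f⁻ⁿ(V) ≠ ∅`. -/
def IsTransitiveMap (f : C(I, I)) : Prop :=
  ∀ U V : Set I, IsOpen U → IsOpen V → U.Nonempty → V.Nonempty →
    ∃ n : ℕ, 0 < n ∧ (U ∩ (f : I → I)^[n] ⁻¹' V).Nonempty

/-- `T(I)`: the set of transitive maps in `C(I, I)`. -/
def TransSet : Set C(I, I) := {f | IsTransitiveMap f}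

/-! ### A criterion for transitivity -/

/-- `S` contains an interval through `z` of length at least `μ`. -/
def HasBigInterval (μ : ℝ) (z : I) (S : Set I) : Prop :=
  ∃ α β : I, μ ≤ (β : ℝ) - α ∧ z ∈ Set.Icc α β ∧ Set.Icc α β ⊆ S

/-- If `F` at least doubles the length of short intervals, while the image of each long interval
contains the `μ`-neighbourhood of its image under a transitive map `f`, then every interval grows
until it is long, and from then on its `F`-orbit swallows its `f`-orbit. -/
lemma isTransitiveMap_of_shadow {F f : C(I, I)} (hf : IsTransitiveMap f) {μ : ℝ} (hμ : 0 < μ)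
    (hμ2 : μ ≤ 1 / 2)
    (h1 : ∀ α β : I, α < β → (β : ℝ) - α ≤ μ →
      ∃ u ∈ Set.Icc α β, ∃ v ∈ Set.Icc α β, 2 * ((β : ℝ) - α) ≤ |(F u : ℝ) - F v|)
    (h2 : ∀ α β : I, μ ≤ (β : ℝ) - α → ∀ z ∈ Set.Icc α β, ∀ y : I,
      |(y : ℝ) - f z| ≤ μ → y ∈ F '' Set.Icc α β) :
    IsTransitiveMap F := by
  intro U V hU hV hUn hVn
  obtain ⟨a, b, hab, habU⟩ := hU.exists_Ioo_subset hUn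
  obtain ⟨a', ha1, ha2⟩ := exists_between hab
  obtain ⟨b', hb1, hb2⟩ := exists_between ha2
  have hab' : (0 : ℝ) < (b' : ℝ) - a' := sub_pos.2 hb1
  have hsub : Set.Icc a' b' ⊆ U := fun x hx =>
    habU ⟨lt_of_lt_of_le ha1 hx.1, lt_of_le_of_lt hx.2 hb2⟩
  have grow : ∀ k : ℕ, ∃ m : ℕ, ∃ α β : I, α < β ∧
      min (2 ^ k * ((b' : ℝ) - a')) μ ≤ (β : ℝ) - α ∧ Set.Icc α β ⊆ (F : I → I)^[m] '' U := by
    intro k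
    induction k with
    | zero => exact ⟨0, a', b', hb1, by simp, by simpa using hsub⟩
    | succ k ih =>
      obtain ⟨m, α, β, hlt, hlen, hs⟩ := ih
      by_cases hc : μ ≤ (β : ℝ) - α
      · exact ⟨m, α, β, hlt, (min_le_right _ _).trans hc, hs⟩
      push Not at hc
      obtain ⟨u, hu, v, hv, huv⟩ := h1 α β hlt hc.le
      have hpos : (0 : ℝ) < (β : ℝ) - α := sub_pos.2 hlt
      have hle : 2 ^ k * ((b' : ℝ) - a') ≤ (β : ℝ) - α := by
        rcases min_le_iff.1 hlen with h | h
        · exact h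
        · linarith
      refine ⟨m + 1, min (F u) (F v), max (F u) (F v), ?_, ?_, ?_⟩
      · refine min_lt_max.2 fun h => ?_
        rw [h] at huv
        simp at huv
        linarith
      · refine (min_le_left _ _).trans ?_
        have : ((max (F u) (F v) : I) : ℝ) - (min (F u) (F v) : I) = |(F u : ℝ) - F v| := by
          rcases le_total (F u) (F v) with h | h
          · rw [max_eq_right h, min_eq_left h, abs_sub_comm,
              abs_of_nonneg (sub_nonneg.2 (Subtype.coe_le_coe.2 h))]
          · rw [max_eq_left h, min_eq_right h,
              abs_of_nonneg (sub_nonneg.2 (Subtype.coe_le_coe.2 h))]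
        rw [this, pow_succ]
        linarith
      · have hivt : Set.uIcc (F u) (F v) ⊆ F '' Set.uIcc u v :=
          intermediate_value_uIcc F.continuous.continuousOn
        rw [Function.iterate_succ', Set.image_comp]
        exact hivt.trans (Set.image_mono ((Set.uIcc_subset_Icc hu hv).trans hs))
  obtain ⟨k, hk⟩ := pow_unbounded_of_one_lt (μ / ((b' : ℝ) - a')) (one_lt_two)
  obtain ⟨m, α, β, hlt, hlen, hs⟩ := grow k
  have hlong : μ ≤ (β : ℝ) - α := by
    rw [div_lt_iff₀ hab'] at hk
    rwa [min_eq_right hk.le] at hlen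
  have step : ∀ z S, HasBigInterval μ z S → HasBigInterval μ (f z) (F '' S) := by
    rintro z S ⟨α, β, hl, hz, hS⟩
    have key : ∀ y : I, |(y : ℝ) - f z| ≤ μ → y ∈ F '' S := fun y hy =>
      Set.image_mono hS (h2 α β hl z hz y hy)
    have h0 := (f z).2.1
    have h1 := (f z).2.2
    by_cases hc : (f z : ℝ) + μ ≤ 1
    · refine ⟨f z, ⟨f z + μ, by linarith, hc⟩, by simp, ⟨le_rfl, ?_⟩, ?_⟩
      · rw [← Subtype.coe_le_coe]; simp [hμ.le]
      · rintro y ⟨hy1, hy2⟩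
        rw [← Subtype.coe_le_coe] at hy1 hy2
        refine key y (abs_le.2 ⟨by linarith, ?_⟩)
        simp only at hy2; linarith
    · push Not at hc
      refine ⟨⟨f z - μ, by linarith, by linarith⟩, f z, by simp, ⟨?_, le_rfl⟩, ?_⟩
      · rw [← Subtype.coe_le_coe]; simp [hμ.le]
      · rintro y ⟨hy1, hy2⟩
        rw [← Subtype.coe_le_coe] at hy1 hy2
        refine key y (abs_le.2 ⟨?_, by linarith⟩)
        simp only at hy1; linarith
  have steps : ∀ (j : ℕ) (z : I) (S), HasBigInterval μ z S →
      HasBigInterval μ ((f : I → I)^[j] z) ((F : I → I)^[j] '' S) := by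
    intro j z S h
    induction j with
    | zero => simpa using h
    | succ j ih =>
      rw [Function.iterate_succ', Function.iterate_succ', Set.image_comp]
      exact step _ _ ih
  obtain ⟨j, hj, z, hz, hzV⟩ := hf (Set.Ioo α β) V isOpen_Ioo hV (Set.nonempty_Ioo.2 hlt) hVn
  obtain ⟨γ, δ, _, hzz, hsub2⟩ := steps j z _ ⟨α, β, hlong, Set.Ioo_subset_Icc_self hz, hs⟩
  obtain ⟨w, ⟨x, hx, rfl⟩, hw⟩ := hsub2 hzz
  refine ⟨j + m, by omega, x, hx, ?_⟩
  rw [Set.mem_preimage, Function.iterate_add_apply, hw]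
  exact hzV

/-! ### Folding and the triangle wave -/

/-- The folding map, which reflects `[-1, 0]` and `[1, 2]` into `[0, 1]`. -/
noncomputable def fold (v : ℝ) : ℝ := 1 - |(1 - |v|)|

lemma continuous_fold : Continuous fold := by unfold fold; fun_prop

lemma fold_of_mem {v : ℝ} (h0 : 0 ≤ v) (h1 : v ≤ 1) : fold v = v := by
  rw [fold, abs_of_nonneg h0, abs_of_nonneg (by linarith)]; ring

lemma fold_of_nonpos {v : ℝ} (h0 : -1 ≤ v) (h1 : v ≤ 0) : fold v = -v := by
  rw [fold, abs_of_nonpos h1, abs_of_nonneg (by linarith)]; ring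

lemma fold_of_one_le {v : ℝ} (h0 : 1 ≤ v) : fold v = 2 - v := by
  rw [fold, abs_of_nonneg (by linarith : 0 ≤ v), abs_of_nonpos (by linarith)]; ring

lemma fold_mem {v : ℝ} (h0 : -1 ≤ v) (h1 : v ≤ 2) : fold v ∈ Set.Icc (0 : ℝ) 1 := by
  rcases le_total v 0 with h | h
  · rw [fold_of_nonpos h0 h]; constructor <;> linarith
  rcases le_total v 1 with h' | h'
  · rw [fold_of_mem h h']; constructor <;> linarith
  · rw [fold_of_one_le h']; constructor <;> linarith

lemma fold_dist {v w : ℝ} : |fold v - fold w| ≤ |v - w| := by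
  unfold fold
  calc |1 - |(1 - |v|)| - (1 - |(1 - |w|)|)| = |(|(1 - |w|)| - |(1 - |v|)|)| := by congr 1; ring
    _ ≤ |1 - |w| - (1 - |v|)| := abs_abs_sub_abs_le_abs_sub _ _
    _ = |(|v| - |w|)| := by congr 1; ring
    _ ≤ |v - w| := abs_abs_sub_abs_le_abs_sub _ _

/-- Folding an interval of `[-1, 2]` divides its length by at most three: it is cut at `0` and `1`,
and folding is isometric on each of the three pieces. -/
lemma fold_var {v w : ℝ} (hv : -1 ≤ v) (hvw : v ≤ w) :
    ∃ s ∈ Set.Icc v w, ∃ t ∈ Set.Icc v w, (w - v) / 3 ≤ |fold s - fold t| := by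
  have key : ∀ s t : ℝ, v ≤ s → s ≤ t → t ≤ w → (w - v) / 3 ≤ t - s →
      (t ≤ 0 ∨ (0 ≤ s ∧ t ≤ 1) ∨ 1 ≤ s) →
      ∃ s ∈ Set.Icc v w, ∃ t ∈ Set.Icc v w, (w - v) / 3 ≤ |fold s - fold t| := by
    intro s t h1 h2 h3 h4 h5
    refine ⟨s, ⟨h1, h2.trans h3⟩, t, ⟨h1.trans h2, h3⟩, h4.trans ?_⟩
    rcases h5 with h | ⟨h, h'⟩ | h
    · rw [fold_of_nonpos (by linarith) (by linarith), fold_of_nonpos (by linarith) h]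
      exact le_trans (by linarith) (le_abs_self _)
    · rw [fold_of_mem h (by linarith), fold_of_mem (by linarith) h']
      exact le_trans (by linarith) (neg_le_abs _)
    · rw [fold_of_one_le h, fold_of_one_le (by linarith)]
      exact le_trans (by linarith) (le_abs_self _)
  rcases le_total w 0 with hw0 | hw0
  · exact key v w le_rfl hvw le_rfl (by linarith) (Or.inl hw0)
  rcases le_total 1 v with hv1 | hv1
  · exact key v w le_rfl hvw le_rfl (by linarith) (Or.inr (Or.inr hv1))
  by_cases c1 : (w - v) / 3 ≤ 0 - v
  · exact key v 0 le_rfl (by linarith) hw0 c1 (Or.inl le_rfl)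
  by_cases c2 : (w - v) / 3 ≤ w - 1
  · exact key 1 w hv1 (by linarith) le_rfl c2 (Or.inr (Or.inr le_rfl))
  push Not at c1 c2
  refine key (max v 0) (min w 1) (le_max_left _ _) ?_ (min_le_left _ _) ?_
    (Or.inr (Or.inl ⟨le_max_right _ _, min_le_right _ _⟩))
  · exact max_le (le_min hvw hv1) (le_min hw0 zero_le_one)
  · rcases le_total v 0 with h | h <;> rcases le_total w 1 with h' | h' <;>
      simp only [h, h', max_eq_left, max_eq_right, min_eq_left, min_eq_right] <;> linarith

/-- The triangle wave: period `1`, slopes `±4`, range `[-1, 1]`. -/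
noncomputable def wave (t : ℝ) : ℝ := 4 * ‖(t : UnitAddCircle)‖ - 1

lemma continuous_wave : Continuous wave := by
  have : Continuous fun t : ℝ => (t : UnitAddCircle) := AddCircle.continuous_mk' 1
  unfold wave; fun_prop

lemma wave_eq (k : ℤ) {t : ℝ} (h0 : k ≤ t) (h1 : t ≤ k + 1) :
    wave t = 4 * min (t - k) (k + 1 - t) - 1 := by
  rw [wave, UnitAddCircle.norm_eq, abs_sub_round_eq_min]
  rcases h1.lt_or_eq with h | rfl
  · have : ⌊t⌋ = k := Int.floor_eq_iff.2 ⟨h0, h⟩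
    rw [Int.fract, this]; congr 3; ring
  · have : Int.fract ((k : ℝ) + 1) = 0 := by
      have := Int.fract_intCast (R := ℝ) (k + 1)
      push_cast at this; exact this
    rw [this]; norm_num

lemma wave_rise (k : ℤ) {t : ℝ} (h0 : k ≤ t) (h1 : t ≤ k + 1 / 2) :
    wave t = 4 * (t - k) - 1 := by
  rw [wave_eq k h0 (by linarith), min_eq_left (by linarith)]

lemma wave_fall (k : ℤ) {t : ℝ} (h0 : k + 1 / 2 ≤ t) (h1 : t ≤ k + 1) :
    wave t = 4 * (k + 1 - t) - 1 := by
  rw [wave_eq k (by linarith) h1, min_eq_right (by linarith)]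

lemma wave_mem (t : ℝ) : -1 ≤ wave t ∧ wave t ≤ 1 := by
  have h0 := Int.floor_le t
  have h1 := (Int.lt_floor_add_one t).le
  rw [wave_eq ⌊t⌋ h0 h1]
  rcases le_total (t - ⌊t⌋) (⌊t⌋ + 1 - t) with h | h
  · rw [min_eq_left h]; constructor <;> linarith
  · rw [min_eq_right h]; constructor <;> linarith

/-- An interval of length at most half a period has at most one turning point of the wave in its
interior, so the wave has slope `±4` on its left half or on its right half. -/
lemma wave_var {s t : ℝ} (hst : s ≤ t) (h : t ≤ s + 1 / 2) :
    ∃ u ∈ Set.Icc s t, ∃ v ∈ Set.Icc s t, 2 * (t - s) ≤ |wave u - wave v| := by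
  have key : ∀ u v : ℝ, s ≤ u → v = u + (t - s) / 2 → v ≤ t → ∀ k : ℤ,
      ((k ≤ u ∧ v ≤ k + 1 / 2) ∨ (k + 1 / 2 ≤ u ∧ v ≤ k + 1)) →
      ∃ u ∈ Set.Icc s t, ∃ v ∈ Set.Icc s t, 2 * (t - s) ≤ |wave u - wave v| := by
    intro u v h1 h2 h3 k hk
    refine ⟨u, ⟨h1, by linarith⟩, v, ⟨by linarith, h3⟩, ?_⟩
    rcases hk with ⟨ha, hb⟩ | ⟨ha, hb⟩
    · rw [wave_rise k ha (by linarith), wave_rise k (by linarith) hb]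
      exact le_trans (by linarith) (neg_le_abs _)
    · rw [wave_fall k ha (by linarith), wave_fall k (by linarith) hb]
      exact le_trans (by linarith) (le_abs_self _)
  have h0 := Int.floor_le s
  have h1 := (Int.lt_floor_add_one s).le
  set k := ⌊s⌋
  rcases le_total s (k + 1 / 2) with c | c
  · rcases le_total ((s + t) / 2) (k + 1 / 2) with c' | c'
    · exact key s ((s + t) / 2) le_rfl (by ring) (by linarith) k (Or.inl ⟨h0, c'⟩)
    · exact key ((s + t) / 2) t (by linarith) (by ring) le_rfl k (Or.inr ⟨c', by linarith⟩)
  · rcases le_total ((s + t) / 2) (k + 1) with c' | c'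
    · exact key s ((s + t) / 2) le_rfl (by ring) (by linarith) k (Or.inr ⟨c, c'⟩)
    · exact key ((s + t) / 2) t (by linarith) (by ring) le_rfl (k + 1)
        (Or.inl ⟨by push_cast; exact c', by push_cast; linarith⟩)

lemma wave_bot (t : ℝ) : ∃ s ∈ Set.Icc t (t + 1), wave s = -1 :=
  ⟨⌈t⌉, ⟨Int.le_ceil t, (Int.ceil_lt_add_one t).le⟩, by
    rw [wave_rise ⌈t⌉ le_rfl (by linarith)]; ring⟩

lemma wave_top (t : ℝ) : ∃ s ∈ Set.Icc t (t + 1), wave s = 1 :=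
  ⟨⌈t - 1 / 2⌉ + 1 / 2, ⟨by linarith [Int.le_ceil (t - 1 / 2)],
    by linarith [(Int.ceil_lt_add_one (t - 1 / 2)).le]⟩, by
    rw [wave_rise ⌈t - 1 / 2⌉ (by linarith) le_rfl]; ring⟩

/-! ### Zigzags between two envelopes -/

/-- The value of an oscillation between the levels `p` and `q` at phase `t`. -/
noncomputable def zig (p q t : ℝ) : ℝ := (p + q) / 2 + (q - p) / 2 * wave t

lemma continuous_zig : Continuous fun w : ℝ × ℝ × ℝ => zig w.1 w.2.1 w.2.2 := by
  have := continuous_wave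
  unfold zig; fun_prop

lemma zig_mem {p q : ℝ} (h : p ≤ q) (t : ℝ) : p ≤ zig p q t ∧ zig p q t ≤ q := by
  obtain ⟨h1, h2⟩ := wave_mem t
  unfold zig
  constructor <;> nlinarith

/-- A folded zigzag between Lipschitz envelopes which leave room `a` on both sides of a transitive
map is transitive, as soon as its frequency `lam` is large compared with `L / a`. -/
lemma isTransitiveMap_of_zig {f F : C(I, I)} (hf : IsTransitiveMap f) {p q : I → ℝ}
    (hpc : Continuous p) (hqc : Continuous q) {a L lam : ℝ} (ha : 0 < a) (ha1 : a ≤ 1)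
    (hL : 0 ≤ L) (hp : ∀ x y : I, |p x - p y| ≤ L * |(x : ℝ) - y|)
    (hq : ∀ x y : I, |q x - q y| ≤ L * |(x : ℝ) - y|)
    (hpf : ∀ z, p z ≤ f z - a) (hqf : ∀ z, f z + a ≤ q z)
    (hp1 : ∀ z, -1 ≤ p z) (hlam : lam * a = 2 * L + 6)
    (hF : ∀ z : I, (F z : ℝ) = fold (zig (p z) (q z) (lam * z))) : IsTransitiveMap F := by
  have hlam0 : 0 < lam := pos_of_mul_pos_left (by linarith : 0 < lam * a) ha.le
  have hlam6 : 6 ≤ lam := by nlinarith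
  set g : I → ℝ := fun z => zig (p z) (q z) (lam * z) with hg
  have hgc : Continuous g := continuous_zig.comp
    (hpc.prodMk (hqc.prodMk (by fun_prop : Continuous fun z : I => lam * (z : ℝ))))
  have hpq : ∀ z, p z ≤ q z := fun z => by linarith [hpf z, hqf z]
  have hg1 : ∀ z, -1 ≤ g z := fun z => (hp1 z).trans (zig_mem (hpq z) _).1
  -- A real point between two points of the interval, seen as a point of the interval.
  have pt : ∀ (α β : I) (t : ℝ), t ∈ Set.Icc (lam * α) (lam * β) →
      ∃ u ∈ Set.Icc α β, lam * (u : ℝ) = t := by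
    rintro α β t ⟨h1, h2⟩
    have e1 : (α : ℝ) ≤ t / lam := by rw [le_div_iff₀ hlam0]; linarith
    have e2 : t / lam ≤ β := by rw [div_le_iff₀ hlam0]; linarith
    exact ⟨⟨t / lam, α.2.1.trans e1, e2.trans β.2.2⟩, ⟨e1, e2⟩, by
      simp only; field_simp⟩
  have hivt : ∀ (α β : I), ∀ s ∈ Set.Icc α β, ∀ t ∈ Set.Icc α β, ∀ y ∈ Set.uIcc (g s) (g t),
      ∃ w ∈ Set.Icc α β, g w = y := by
    intro α β s hs t ht y hy
    obtain ⟨w, hw, hwy⟩ := intermediate_value_uIcc hgc.continuousOn hy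
    exact ⟨w, Set.uIcc_subset_Icc hs ht hw, hwy⟩
  refine isTransitiveMap_of_shadow hf (μ := 1 / lam) (by positivity)
    (one_div_le_one_div_of_le (by norm_num) (by linarith)) ?_ ?_
  · intro α β hαβ hlen
    have hαβ' : (α : ℝ) < β := hαβ
    have hlen' : lam * ((β : ℝ) - α) ≤ 1 := by rwa [le_div_iff₀ hlam0, mul_comm] at hlen
    -- On the left half `[α, γ]` the phase varies by at most half a period.
    set γ : ℝ := ((α : ℝ) + β) / 2 with hγ
    obtain ⟨s', ⟨hs1, hs2⟩, t', ⟨ht1, ht2⟩, hst⟩ :=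
      wave_var (s := lam * α) (t := lam * γ) (by rw [hγ]; nlinarith) (by rw [hγ]; nlinarith)
    have hγβ : lam * γ ≤ lam * β := by rw [hγ]; nlinarith
    obtain ⟨s, hs, rfl⟩ := pt α β s' ⟨hs1, hs2.trans hγβ⟩
    obtain ⟨t, ht, rfl⟩ := pt α β t' ⟨ht1, ht2.trans hγβ⟩
    have hsγ : (s : ℝ) ≤ γ := le_of_mul_le_mul_left hs2 hlam0
    have htγ : (t : ℝ) ≤ γ := le_of_mul_le_mul_left ht2 hlam0
    have hsα : (α : ℝ) ≤ s := hs.1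
    have htα : (α : ℝ) ≤ t := ht.1
    have hdist : |(s : ℝ) - t| ≤ ((β : ℝ) - α) / 2 := by
      rw [abs_le]; constructor <;> linarith
    have hvar : 6 * ((β : ℝ) - α) ≤ |g s - g t| := by
      have e : g s - g t = (q s - p s) / 2 * (wave (lam * s) - wave (lam * t)) +
          ((p s - p t) * ((1 - wave (lam * t)) / 2) + (q s - q t) * ((1 + wave (lam * t)) / 2)) := by
        simp only [hg, zig]; ring
      obtain ⟨w1, w2⟩ := wave_mem (lam * t)
      have hrest : |(p s - p t) * ((1 - wave (lam * t)) / 2) +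
          (q s - q t) * ((1 + wave (lam * t)) / 2)| ≤ L * |(s : ℝ) - t| := by
        refine (abs_add_le _ _).trans ?_
        rw [abs_mul, abs_mul, abs_of_nonneg (by linarith : 0 ≤ (1 - wave (lam * t)) / 2),
          abs_of_nonneg (by linarith : 0 ≤ (1 + wave (lam * t)) / 2)]
        nlinarith [hp s t, hq s t]
      have hmain : a * (2 * (lam * γ - lam * α)) ≤
          |(q s - p s) / 2 * (wave (lam * s) - wave (lam * t))| := by
        rw [abs_mul]
        have hb : a ≤ |(q s - p s) / 2| :=
          le_trans (by linarith [hpf s, hqf s]) (le_abs_self _)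
        exact mul_le_mul hb hst (by rw [hγ]; nlinarith) (abs_nonneg _)
      have hval : a * (2 * (lam * γ - lam * α)) = (2 * L + 6) * ((β : ℝ) - α) := by
        rw [← hlam, hγ]; ring
      rw [e]
      have := abs_sub_abs_le_abs_add ((q s - p s) / 2 * (wave (lam * s) - wave (lam * t)))
        ((p s - p t) * ((1 - wave (lam * t)) / 2) + (q s - q t) * ((1 + wave (lam * t)) / 2))
      have hLd := mul_le_mul_of_nonneg_left hdist hL
      nlinarith
    have hmm : max (g s) (g t) - min (g s) (g t) = |g s - g t| := max_sub_min_eq_abs' _ _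
    obtain ⟨x, hx, y, hy, hxy⟩ := fold_var (v := min (g s) (g t)) (w := max (g s) (g t))
      (le_min (hg1 s) (hg1 t)) min_le_max
    obtain ⟨u, hu, rfl⟩ := hivt α β s hs t ht x hx
    obtain ⟨v, hv, rfl⟩ := hivt α β s hs t ht y hy
    refine ⟨u, hu, v, hv, ?_⟩
    rw [hF, hF]
    refine le_trans ?_ hxy
    rw [hmm]; linarith
  · intro α β hlen z hz y hy
    have hlen' : 1 ≤ lam * ((β : ℝ) - α) := by rwa [div_le_iff₀ hlam0, mul_comm] at hlen
    have hz1 : (α : ℝ) ≤ z := hz.1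
    have hz2 : (z : ℝ) ≤ β := hz.2
    -- A whole period `[t₀, t₀ + 1]` of the phase near that of `z`, inside the given interval.
    obtain ⟨t₀, h1, h2, h3, h4⟩ : ∃ t₀, lam * α ≤ t₀ ∧ t₀ + 1 ≤ lam * β ∧ t₀ ≤ lam * z ∧
        lam * z ≤ t₀ + 1 := by
      rcases le_total (lam * (z : ℝ) + 1) (lam * β) with h | h
      · exact ⟨lam * z, by nlinarith, h, le_rfl, by linarith⟩
      · exact ⟨lam * β - 1, by linarith, by linarith, by linarith, by nlinarith⟩
    have near : ∀ u : I, lam * (u : ℝ) ∈ Set.Icc t₀ (t₀ + 1) → |(u : ℝ) - z| ≤ 1 / lam := by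
      rintro u ⟨hu1, hu2⟩
      rw [le_div_iff₀ hlam0]
      calc |(u : ℝ) - z| * lam = |((u : ℝ) - z) * lam| := by rw [abs_mul, abs_of_pos hlam0]
        _ ≤ 1 := by rw [abs_le]; constructor <;> nlinarith
    have hroom : L * (1 / lam) + 1 / lam ≤ a := by
      rw [← add_one_mul, mul_one_div, div_le_iff₀ hlam0]; linarith
    obtain ⟨s', hs', hs⟩ := wave_bot t₀
    obtain ⟨t', ht', ht⟩ := wave_top t₀
    obtain ⟨s, hsI, rfl⟩ := pt α β s' ⟨h1.trans hs'.1, hs'.2.trans h2⟩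
    obtain ⟨t, htI, rfl⟩ := pt α β t' ⟨h1.trans ht'.1, ht'.2.trans h2⟩
    have es : g s = p s := by simp only [hg, zig, hs]; ring
    have et : g t = q t := by simp only [hg, zig, ht]; ring
    have ds := (abs_le.1 ((hp s z).trans (mul_le_mul_of_nonneg_left (near s hs') hL))).2
    have dt := (abs_le.1 ((hq t z).trans (mul_le_mul_of_nonneg_left (near t ht') hL))).1
    obtain ⟨y1, y2⟩ := abs_le.1 hy
    obtain ⟨w, hw, hwy⟩ := hivt α β s hsI t htI y (Set.Icc_subset_uIcc
      ⟨by rw [es]; linarith [hpf z], by rw [et]; linarith [hqf z]⟩)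
    refine ⟨w, hw, Subtype.ext ?_⟩
    rw [hF]
    change fold (g w) = y
    rw [hwy, fold_of_mem y.2.1 y.2.2]

/-! ### Lipschitz regularization -/

/-- The Lipschitz regularization (infimal convolution with `k * |·|`) of `P`. -/
noncomputable def infc (P : I → ℝ) (k : ℝ) (z : I) : ℝ :=
  sInf ((fun y : I => P y + k * |(z : ℝ) - y|) '' Set.univ)

lemma infc_isLeast {P : I → ℝ} (hP : Continuous P) (k : ℝ) (z : I) :
    IsLeast ((fun y : I => P y + k * |(z : ℝ) - y|) '' Set.univ) (infc P k z) :=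
  (isCompact_univ.image (by fun_prop)).isLeast_sInf ⟨_, z, trivial, rfl⟩

lemma infc_le {P : I → ℝ} (hP : Continuous P) (k : ℝ) (z y : I) :
    infc P k z ≤ P y + k * |(z : ℝ) - y| :=
  (infc_isLeast hP k z).2 ⟨y, trivial, rfl⟩

lemma exists_infc {P : I → ℝ} (hP : Continuous P) (k : ℝ) (z : I) :
    ∃ y : I, infc P k z = P y + k * |(z : ℝ) - y| := by
  obtain ⟨y, -, hy⟩ := (infc_isLeast hP k z).1
  exact ⟨y, hy.symm⟩

lemma infc_le_self {P : I → ℝ} (hP : Continuous P) (k : ℝ) (z : I) : infc P k z ≤ P z := by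
  simpa using infc_le hP k z z

lemma infc_nonneg {P : I → ℝ} (hP : Continuous P) (h0 : ∀ y, 0 ≤ P y) {k : ℝ} (hk : 0 ≤ k)
    (z : I) : 0 ≤ infc P k z := by
  obtain ⟨y, hy⟩ := exists_infc hP k z
  rw [hy]
  have := h0 y
  positivity

lemma infc_lipschitz {P : I → ℝ} (hP : Continuous P) {k : ℝ} (hk : 0 ≤ k) (x y : I) :
    |infc P k x - infc P k y| ≤ k * |(x : ℝ) - y| := by
  have key : ∀ x y : I, infc P k x ≤ infc P k y + k * |(x : ℝ) - y| := by
    intro x y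
    obtain ⟨w, hw⟩ := exists_infc hP k y
    have h1 := infc_le hP k x w
    have h2 := mul_le_mul_of_nonneg_left (abs_sub_le (x : ℝ) y w) hk
    rw [hw]; linarith
  have h1 := key x y
  have h2 := key y x
  rw [abs_sub_comm (y : ℝ)] at h2
  rw [abs_le]; constructor <;> linarith

lemma continuous_infc {X : Type*} [TopologicalSpace X] {P : X → I → ℝ}
    (hP : Continuous fun w : X × I => P w.1 w.2) :
    Continuous fun w : X × ℝ × I => infc (P w.1) w.2.1 w.2.2 := by
  refine isCompact_univ.continuous_sInf
    (f := fun (w : X × ℝ × I) (y : I) => P w.1 y + w.2.1 * |(w.2.2 : ℝ) - y|) ?_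
  have : Continuous fun v : (X × ℝ × I) × I => P v.1.1 v.2 :=
    hP.comp (by fun_prop : Continuous fun v : (X × ℝ × I) × I => (v.1.1, v.2))
  change Continuous fun v : (X × ℝ × I) × I => P v.1.1 v.2 + v.1.2.1 * |(v.1.2.2 : ℝ) - v.2|
  fun_prop

/-- For `0 ≤ P ≤ 1` the infimal convolution with `(1 / h) * |·|` is attained within distance `h`, so
it lowers `P` by at most the oscillation of `P` at scale `h`. -/
lemma sub_le_infc {P : I → ℝ} (hP : Continuous P) (h0 : ∀ y, 0 ≤ P y) (h1 : ∀ y, P y ≤ 1)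
    {h e : ℝ} (hh : 0 < h) (he : ∀ y z : I, |(z : ℝ) - y| ≤ h → |P z - P y| ≤ e) (z : I) :
    P z - e ≤ infc P (1 / h) z := by
  obtain ⟨y, hy⟩ := exists_infc hP (1 / h) z
  have hle := infc_le_self hP (1 / h) z
  have hnn : 0 ≤ 1 / h * |(z : ℝ) - y| := by positivity
  have hd : |(z : ℝ) - y| ≤ h := by
    have : 1 / h * |(z : ℝ) - y| ≤ 1 := by linarith [h0 y, h1 z]
    rwa [one_div, inv_mul_le_iff₀ hh, mul_one] at this
  have := (abs_le.1 (he y z hd)).2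
  linarith

/-! ### Transitive maps inside a band -/

/-- The value at `z` of the folded zigzag between the regularized envelopes `P` and `Q`; the one
parameter `h` is both the scale of regularization and the extra room on either side. -/
noncomputable def zigzag (P Q : I → ℝ) (h : ℝ) (z : I) : ℝ :=
  fold (zig (infc P (1 / h) z - h) (1 - infc (fun y => 1 - Q y) (1 / h) z + h)
    ((2 * (1 / h) + 6) / h * z))

lemma zigzag_band {P Q : I → ℝ} (hP : Continuous P) (hQ : Continuous Q) (hP0 : ∀ y, 0 ≤ P y)
    (hPQ : ∀ y, P y ≤ Q y) (hQ1 : ∀ y, Q y ≤ 1) {h e : ℝ} (hh : 0 < h) (hh1 : h ≤ 1)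
    (hPe : ∀ y z : I, |(z : ℝ) - y| ≤ h → |P z - P y| ≤ e)
    (hQe : ∀ y z : I, |(z : ℝ) - y| ≤ h → |Q z - Q y| ≤ e) (z : I) :
    0 ≤ zigzag P Q h z ∧ zigzag P Q h z ≤ 1 ∧
      P z - (e + h) ≤ zigzag P Q h z ∧ zigzag P Q h z ≤ Q z + (e + h) := by
  have hQ' : Continuous fun y => 1 - Q y := by fun_prop
  have a1 := infc_le_self hP (1 / h) z
  have a2 := infc_le_self hQ' (1 / h) z
  have b1 := sub_le_infc hP hP0 (fun y => (hPQ y).trans (hQ1 y)) hh hPe z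
  have b2 := sub_le_infc hQ' (fun y => sub_nonneg.2 (hQ1 y))
    (fun y => by linarith [hP0 y, hPQ y]) (e := e) hh
    (fun y z hd => by
      rw [show 1 - Q z - (1 - Q y) = -(Q z - Q y) by ring, abs_neg]; exact hQe y z hd) z
  have c1 := infc_nonneg hP hP0 (by positivity : 0 ≤ 1 / h) z
  have c2 := infc_nonneg hQ' (fun y => sub_nonneg.2 (hQ1 y)) (by positivity : 0 ≤ 1 / h) z
  have hz := hPQ z
  have hz0 := hP0 z
  have hz1 := hQ1 z
  obtain ⟨g1, g2⟩ := zig_mem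
    (by linarith : infc P (1 / h) z - h ≤ 1 - infc (fun y => 1 - Q y) (1 / h) z + h)
    ((2 * (1 / h) + 6) / h * z)
  have he : 0 ≤ e := (abs_nonneg _).trans (hPe z z (by simp [hh.le]))
  unfold zigzag
  set v := zig (infc P (1 / h) z - h) (1 - infc (fun y => 1 - Q y) (1 / h) z + h)
    ((2 * (1 / h) + 6) / h * z) with hv
  obtain ⟨f0, f1⟩ := fold_mem (v := v) (by linarith) (by linarith)
  refine ⟨f0, f1, ?_⟩
  rcases le_total v 0 with c | c
  · rw [fold_of_nonpos (by linarith) c] at *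
    constructor <;> linarith
  rcases le_total v 1 with c' | c'
  · rw [fold_of_mem c c'] at *
    constructor <;> linarith
  · rw [fold_of_one_le c'] at *
    constructor <;> linarith

lemma zigzag_transitive {P Q : I → ℝ} (hP : Continuous P) (hQ : Continuous Q)
    (hP0 : ∀ y, 0 ≤ P y) {h : ℝ} (hh : 0 < h) (hh1 : h ≤ 1)
    {f F : C(I, I)} (hf : IsTransitiveMap f) (hPf : ∀ z, P z ≤ f z) (hfQ : ∀ z, f z ≤ Q z)
    (hF : ∀ z : I, (F z : ℝ) = zigzag P Q h z) : IsTransitiveMap F := by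
  have hQ' : Continuous fun y => 1 - Q y := by fun_prop
  have hk : 0 ≤ 1 / h := by positivity
  have hc : ∀ {R : I → ℝ}, Continuous R → Continuous fun z => infc R (1 / h) z := by
    intro R hR
    exact (continuous_infc (X := Unit) (P := fun _ => R) (hR.comp continuous_snd)).comp
      (by fun_prop : Continuous fun z : I => ((), 1 / h, z))
  refine isTransitiveMap_of_zig hf ((hc hP).sub continuous_const)
    ((continuous_const.sub (hc hQ')).add continuous_const) (a := h) (L := 1 / h) hh hh1 hk
    ?_ ?_ ?_ ?_ ?_ ?_ hF
  · intro x y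
    simpa using infc_lipschitz hP hk x y
  · intro x y
    have := infc_lipschitz hQ' hk x y
    rwa [← abs_neg, show -(infc (fun y => 1 - Q y) (1 / h) x - infc (fun y => 1 - Q y) (1 / h) y) =
      (1 - infc (fun y => 1 - Q y) (1 / h) x + h) - (1 - infc (fun y => 1 - Q y) (1 / h) y + h)
      by ring] at this
  · intro z
    simp only [Pi.sub_apply]
    linarith [infc_le_self hP (1 / h) z, hPf z]
  · intro z
    have := infc_le_self hQ' (1 / h) z
    simp only [Pi.sub_apply, Pi.add_apply]
    linarith [hfQ z]
  · intro z
    simp only [Pi.sub_apply]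
    linarith [infc_nonneg hP hP0 hk z]
  · field_simp

/-- Zigzags fill a band continuously: if `P ≤ f ≤ Q` for transitive maps `f x`, with equality
where `τ` vanishes, then the maps `f x` at the zeros of `τ` extend to a continuous family of
transitive maps with values in the `δ`-neighbourhood of the band. -/
lemma exists_transitive_in_band {X : Type*} [MetricSpace X] [CompactSpace X]
    {P Q : X → I → ℝ} (hP : Continuous fun w : X × I => P w.1 w.2)
    (hQ : Continuous fun w : X × I => Q w.1 w.2)
    {τ : X → ℝ} (hτ : Continuous τ) (hτ0 : ∀ x, 0 ≤ τ x) (hτ1 : ∀ x, τ x ≤ 1)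
    {f : X → C(I, I)} (hf : ∀ x, IsTransitiveMap (f x))
    (hPf : ∀ x z, P x z ≤ f x z) (hfQ : ∀ x z, f x z ≤ Q x z)
    (hP0 : ∀ x z, 0 ≤ P x z) (hQ1 : ∀ x z, Q x z ≤ 1)
    (hPe : ∀ x, τ x = 0 → ∀ z, P x z = f x z) (hQe : ∀ x, τ x = 0 → ∀ z, Q x z = f x z)
    {δ : ℝ} (hδ : 0 < δ) :
    ∃ Φ : X → C(I, I), Continuous Φ ∧ (∀ x, IsTransitiveMap (Φ x)) ∧
      (∀ x, τ x = 0 → Φ x = f x) ∧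
      ∀ x z, P x z - δ ≤ Φ x z ∧ (Φ x z : ℝ) ≤ Q x z + δ := by
  have hPx : ∀ x, Continuous (P x) := fun x => hP.comp (by fun_prop : Continuous fun z => (x, z))
  have hQx : ∀ x, Continuous (Q x) := fun x => hQ.comp (by fun_prop : Continuous fun z => (x, z))
  have hPQ : ∀ x z, P x z ≤ Q x z := fun x z => (hPf x z).trans (hfQ x z)
  -- Uniform continuity in the second variable.
  have mod1 : ∀ R : X → I → ℝ, Continuous (fun w : X × I => R w.1 w.2) → ∀ e > 0,
      ∃ d > 0, ∀ x (y z : I), |(z : ℝ) - y| < d → |R x z - R x y| ≤ e := by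
    intro R hR e he
    obtain ⟨d, hd, h⟩ := Metric.uniformContinuous_iff.1
      (CompactSpace.uniformContinuous_of_continuous hR) e he
    refine ⟨d, hd, fun x y z hyz => ?_⟩
    have := h (a := (x, z)) (b := (x, y)) (by
      rw [Prod.dist_eq]
      simpa [Subtype.dist_eq, Real.dist_eq, hd] using hyz)
    rw [Real.dist_eq] at this
    exact this.le
  have band : ∀ e > 0, ∃ d > 0, ∀ x z h, 0 < h → h ≤ d → 0 ≤ zigzag (P x) (Q x) h z ∧
      zigzag (P x) (Q x) h z ≤ 1 ∧ P x z - e ≤ zigzag (P x) (Q x) h z ∧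
      zigzag (P x) (Q x) h z ≤ Q x z + e := by
    intro e he
    obtain ⟨d1, hd1, h1⟩ := mod1 P hP (e / 2) (by positivity)
    obtain ⟨d2, hd2, h2⟩ := mod1 Q hQ (e / 2) (by positivity)
    refine ⟨min (min (d1 / 2) (d2 / 2)) (min (e / 2) 1), by positivity, fun x z h hh hle => ?_⟩
    simp only [le_min_iff] at hle
    obtain ⟨⟨l1, l2⟩, l3, l4⟩ := hle
    obtain ⟨A, B, C, D⟩ := zigzag_band (hPx x) (hQx x) (hP0 x) (hPQ x) (hQ1 x) hh l4 (e := e / 2)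
      (fun y z hd => h1 x y z (by linarith)) (fun y z hd => h2 x y z (by linarith)) z
    exact ⟨A, B, by linarith, by linarith⟩
  obtain ⟨d, hd, hband⟩ := band δ hδ
  set κ := min d 1 with hκ
  have hκ0 : 0 < κ := by positivity
  have hκd : ∀ x, κ * τ x ≤ d := fun x =>
    (mul_le_of_le_one_right hκ0.le (hτ1 x)).trans (min_le_left _ _)
  have hκ1 : ∀ x, κ * τ x ≤ 1 := fun x =>
    (mul_le_of_le_one_right hκ0.le (hτ1 x)).trans (min_le_right _ _)
  have hpos : ∀ x, τ x ≠ 0 → 0 < κ * τ x := fun x hx =>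
    mul_pos hκ0 ((hτ0 x).lt_of_ne' hx)
  classical
  set G : X × I → ℝ := fun w => if τ w.1 = 0 then P w.1 w.2 else
    zigzag (P w.1) (Q w.1) (κ * τ w.1) w.2 with hG
  have hG01 : ∀ w, G w ∈ I := by
    intro w
    by_cases h : τ w.1 = 0
    · simp only [hG, if_pos h]
      exact ⟨hP0 _ _, (hPQ _ _).trans (hQ1 _ _)⟩
    · simp only [hG, if_neg h]
      obtain ⟨A, B, -⟩ := hband w.1 w.2 _ (hpos _ h) (hκd _)
      exact ⟨A, B⟩
  have hGc : Continuous G := by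
    rw [continuous_iff_continuousAt]
    rintro ⟨x, z⟩
    by_cases h : τ x = 0
    · rw [Metric.continuousAt_iff']
      intro e he
      obtain ⟨d', hd', hb⟩ := band (e / 2) (by positivity)
      have hPx0 : P x z = Q x z := by rw [hPe x h, hQe x h]
      have e1 : ∀ᶠ w : X × I in nhds (x, z), κ * τ w.1 < d' := by
        have hc : Continuous fun w : X × I => κ * τ w.1 := by fun_prop
        exact hc.continuousAt.eventually_lt continuousAt_const (by simpa [h] using hd')
      have e2 : ∀ᶠ w : X × I in nhds (x, z), |P w.1 w.2 - P x z| < e / 2 :=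
        Metric.continuousAt_iff'.1 hP.continuousAt (e / 2) (by positivity)
      have e3 : ∀ᶠ w : X × I in nhds (x, z), |Q w.1 w.2 - Q x z| < e / 2 :=
        Metric.continuousAt_iff'.1 hQ.continuousAt (e / 2) (by positivity)
      filter_upwards [e1, e2, e3] with w w1 w2 w3
      have hGx : G (x, z) = P x z := by simp [hG, h]
      rw [abs_lt] at w2 w3
      rw [hGx, Real.dist_eq, abs_lt]
      by_cases h' : τ w.1 = 0
      · simp only [hG, if_pos h']
        constructor <;> linarith
      · simp only [hG, if_neg h']
        obtain ⟨-, -, A, B⟩ := hb w.1 w.2 _ (hpos _ h') w1.le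
        constructor <;> linarith
    · have hev : ∀ᶠ w : X × I in nhds (x, z), τ w.1 ≠ 0 :=
        (hτ.comp continuous_fst).continuousAt.eventually_ne h
      have hGev : (fun w : X × I => zigzag (P w.1) (Q w.1) (κ * τ w.1) w.2) =ᶠ[nhds (x, z)] G := by
        filter_upwards [hev] with w hw
        simp [hG, hw]
      refine ContinuousAt.congr ?_ hGev
      have hne : κ * τ x ≠ 0 := (hpos x h).ne'
      have c0 : ContinuousAt (fun w : X × I => κ * τ w.1) (x, z) := by fun_prop
      have c1 : ContinuousAt (fun w : X × I => 1 / (κ * τ w.1)) (x, z) :=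
        continuousAt_const.div c0 hne
      have c2 : ContinuousAt (fun w : X × I => (2 * (1 / (κ * τ w.1)) + 6) / (κ * τ w.1) * w.2)
          (x, z) := by
        refine ContinuousAt.mul (ContinuousAt.div ?_ c0 hne) (by fun_prop)
        exact (continuousAt_const.mul c1).add continuousAt_const
      have ci : ∀ R : X → I → ℝ, Continuous (fun w : X × I => R w.1 w.2) →
          ContinuousAt (fun w : X × I => infc (R w.1) (1 / (κ * τ w.1)) w.2) (x, z) := by
        intro R hR
        exact ContinuousAt.comp
          (g := fun w : X × ℝ × I => infc (R w.1) w.2.1 w.2.2)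
          (f := fun w : X × I => (w.1, 1 / (κ * τ w.1), w.2))
          (continuous_infc hR).continuousAt
          (continuousAt_fst.prodMk (c1.prodMk continuousAt_snd))
      have i1 := ci P hP
      have i2 := ci (fun x y => 1 - Q x y) (by fun_prop)
      have hz := ContinuousAt.comp (x := (x, z)) (g := fun w : ℝ × ℝ × ℝ => zig w.1 w.2.1 w.2.2)
        (f := fun w : X × I => (infc (P w.1) (1 / (κ * τ w.1)) w.2 - κ * τ w.1,
          1 - infc (fun y => 1 - Q w.1 y) (1 / (κ * τ w.1)) w.2 + κ * τ w.1,
          (2 * (1 / (κ * τ w.1)) + 6) / (κ * τ w.1) * (w.2 : ℝ)))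
        continuous_zig.continuousAt
        ((i1.sub c0).prodMk (((continuousAt_const.sub i2).add c0).prodMk c2))
      exact continuous_fold.continuousAt.comp hz
  have hcod : Continuous fun w => (⟨G w, hG01 w⟩ : I) := hGc.subtype_mk hG01
  set Φ : X → C(I, I) := fun x => ⟨fun z => ⟨G (x, z), hG01 (x, z)⟩,
    hcod.comp (by fun_prop : Continuous fun z => (x, z))⟩ with hΦ
  have hΦ0 : ∀ x, τ x = 0 → Φ x = f x := by
    intro x hx
    ext z
    simp [hΦ, hG, hx, hPe x hx]
  have hΦ1 : ∀ x, τ x ≠ 0 → ∀ z, (Φ x z : ℝ) = zigzag (P x) (Q x) (κ * τ x) z := by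
    intro x hx z
    simp [hΦ, hG, hx]
  refine ⟨Φ, ContinuousMap.continuous_of_continuous_uncurry _ hcod, fun x => ?_, hΦ0,
    fun x z => ?_⟩
  · by_cases h : τ x = 0
    · rw [hΦ0 x h]; exact hf x
    · exact zigzag_transitive (hPx x) (hQx x) (hP0 x) (hpos x h) (hκ1 x) (hf x) (hPf x) (hfQ x)
        (hΦ1 x h)
  · by_cases h : τ x = 0
    · rw [hΦ0 x h]
      constructor <;> linarith [hPf x z, hfQ x z]
    · rw [hΦ1 x h]
      obtain ⟨-, -, A, B⟩ := hband x z _ (hpos _ h) (hκd _)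
      exact ⟨A, B⟩

/-! ### Filling a sphere of transitive maps -/

/-- A sphere of transitive maps extends to a ball of transitive maps whose values lie in the
`δ`-neighbourhood of the pointwise order hull of the sphere. -/
lemma exists_filling {E : Type*} [NormedAddCommGroup E] [NormedSpace ℝ E] [ProperSpace E]
    [Nonempty (Metric.sphere (0 : E) 1)] (φ : Metric.sphere (0 : E) 1 → C(I, I))
    (hφ : Continuous φ) (hT : ∀ u, IsTransitiveMap (φ u)) {δ : ℝ} (hδ : 0 < δ) :
    ∃ Φ : Metric.closedBall (0 : E) 1 → C(I, I), Continuous Φ ∧ (∀ x, IsTransitiveMap (Φ x)) ∧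
      (∀ u : Metric.sphere (0 : E) 1, Φ ⟨u, Metric.sphere_subset_closedBall u.2⟩ = φ u) ∧
      ∀ x z c d, (∀ u, c ≤ (φ u z : ℝ)) → (∀ u, (φ u z : ℝ) ≤ d) →
        c - δ ≤ Φ x z ∧ (Φ x z : ℝ) ≤ d + δ := by
  have : CompactSpace (Metric.sphere (0 : E) 1) :=
    isCompact_iff_compactSpace.1 (isCompact_sphere _ _)
  have : CompactSpace (Metric.closedBall (0 : E) 1) :=
    isCompact_iff_compactSpace.1 (isCompact_closedBall _ _)
  obtain ⟨u₀⟩ := ‹Nonempty (Metric.sphere (0 : E) 1)›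
  have hφ2 : Continuous fun w : I × Metric.sphere (0 : E) 1 => (φ w.2 w.1 : ℝ) := by
    fun_prop
  have hφz : ∀ z : I, Continuous fun u => (φ u z : ℝ) := fun z =>
    hφ2.comp (by fun_prop : Continuous fun u => (z, u))
  set m : I → ℝ := fun z => sInf ((fun u => (φ u z : ℝ)) '' Set.univ) with hm
  set M : I → ℝ := fun z => sSup ((fun u => (φ u z : ℝ)) '' Set.univ) with hM
  have hmc : Continuous m := isCompact_univ.continuous_sInf
    (f := fun (z : I) (u : Metric.sphere (0 : E) 1) => (φ u z : ℝ)) hφ2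
  have hMc : Continuous M := isCompact_univ.continuous_sSup
    (f := fun (z : I) (u : Metric.sphere (0 : E) 1) => (φ u z : ℝ)) hφ2
  have hml : ∀ z, IsLeast ((fun u => (φ u z : ℝ)) '' Set.univ) (m z) := fun z =>
    (isCompact_univ.image (hφz z)).isLeast_sInf ⟨_, u₀, trivial, rfl⟩
  have hMg : ∀ z, IsGreatest ((fun u => (φ u z : ℝ)) '' Set.univ) (M z) := fun z =>
    (isCompact_univ.image (hφz z)).isGreatest_sSup ⟨_, u₀, trivial, rfl⟩
  have hmle : ∀ z u, m z ≤ φ u z := fun z u => (hml z).2 ⟨u, trivial, rfl⟩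
  have hleM : ∀ z u, φ u z ≤ M z := fun z u => (hMg z).2 ⟨u, trivial, rfl⟩
  have hlem : ∀ z c, (∀ u, c ≤ (φ u z : ℝ)) → c ≤ m z := by
    intro z c h
    obtain ⟨u, -, hu⟩ := (hml z).1
    rw [← hu]; exact h u
  have hMle : ∀ z d, (∀ u, (φ u z : ℝ) ≤ d) → M z ≤ d := by
    intro z c h
    obtain ⟨u, -, hu⟩ := (hMg z).1
    rw [← hu]; exact h u
  have hm0 : ∀ z, 0 ≤ m z := fun z => hlem z 0 fun u => (φ u z).2.1
  have hM1 : ∀ z, M z ≤ 1 := fun z => hMle z 1 fun u => (φ u z).2.2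
  classical
  -- Radial projection to the sphere; its value at the origin plays no role.
  set r : E → Metric.sphere (0 : E) 1 := fun x => if h : x = 0 then u₀ else
    ⟨‖x‖⁻¹ • x, by
      rw [mem_sphere_zero_iff_norm, norm_smul, norm_inv, norm_norm,
        inv_mul_cancel₀ (norm_ne_zero_iff.2 h)]⟩ with hr
  have hr1 : ∀ u : Metric.sphere (0 : E) 1, r u = u := by
    intro u
    have hu : ‖(u : E)‖ = 1 := mem_sphere_zero_iff_norm.1 u.2
    have hne : (u : E) ≠ 0 := by rw [← norm_ne_zero_iff, hu]; exact one_ne_zero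
    simp [hr, hne, hu]
  have hrc : ∀ x : E, x ≠ 0 → ContinuousAt r x := by
    intro x hx
    rw [Topology.IsInducing.subtypeVal.continuousAt_iff]
    have hc : ContinuousAt (fun y : E => ‖y‖⁻¹ • y) x :=
      (continuousAt_id.norm.inv₀ (norm_ne_zero_iff.2 hx)).smul continuousAt_id
    refine hc.congr ?_
    filter_upwards [isOpen_ne.mem_nhds hx] with y hy
    have hy' : y ≠ 0 := hy
    simp [hr, hy']
  set ρ : E → ℝ := fun x => max 0 (2 * ‖x‖ - 1) with hρ
  have hρc : Continuous ρ := by fun_prop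
  set B := Metric.closedBall (0 : E) 1
  have hρ0 : ∀ x : B, 0 ≤ ρ x := fun x => le_max_left _ _
  have hB : ∀ x : B, ‖(x : E)‖ ≤ 1 := fun x => mem_closedBall_zero_iff.1 x.2
  have hρ1 : ∀ x : B, ρ x ≤ 1 := fun x => max_le zero_le_one (by linarith [hB x])
  have hθ : Continuous fun w : B × I => ρ w.1 * (φ (r w.1) w.2 : ℝ) := by
    rw [continuous_iff_continuousAt]
    rintro ⟨x, z⟩
    by_cases hx : (x : E) = 0
    · have h1 : ∀ᶠ w : B × I in nhds (x, z), ‖(w.1 : E)‖ < 1 / 2 := by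
        have hc : Continuous fun w : B × I => ‖(w.1 : E)‖ := by fun_prop
        exact hc.continuousAt.eventually_lt continuousAt_const (by simp [hx])
      refine (continuousAt_const (y := (0 : ℝ))).congr ?_
      filter_upwards [h1] with w hw
      have : ρ w.1 = 0 := max_eq_left (by linarith)
      rw [this, zero_mul]
    · have h1 : ContinuousAt (fun w : B × I => (w.2, r w.1)) (x, z) := by
        refine continuousAt_snd.prodMk ?_
        exact ContinuousAt.comp (x := (x, z)) (g := r) (f := fun w : B × I => (w.1 : E))
          (hrc x hx) (by fun_prop)
      exact ContinuousAt.mul (by fun_prop)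
        (ContinuousAt.comp (x := (x, z)) (f := fun w : B × I => (w.2, r w.1))
          hφ2.continuousAt h1)
  have conv : ∀ (s a b : ℝ), 0 ≤ s → s ≤ 1 → a ≤ b →
      a ≤ s * b + (1 - s) * a ∧ s * b + (1 - s) * a ≤ b ∧
      a ≤ s * a + (1 - s) * b ∧ s * a + (1 - s) * b ≤ b := by
    intro s a b h0 h1 hab
    refine ⟨?_, ?_, ?_, ?_⟩ <;> nlinarith
  have hτ : ∀ x : B, 1 - ‖(x : E)‖ = 0 → ρ x = 1 := by
    intro x hx
    have : ‖(x : E)‖ = 1 := by linarith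
    simp only [hρ, this]; norm_num
  obtain ⟨Φ, hΦc, hΦT, hΦe, hΦb⟩ := exists_transitive_in_band (X := B)
    (P := fun x z => ρ x * (φ (r x) z : ℝ) + (1 - ρ x) * m z)
    (Q := fun x z => ρ x * (φ (r x) z : ℝ) + (1 - ρ x) * M z)
    (hθ.add (by fun_prop)) (hθ.add (by fun_prop))
    (τ := fun x => 1 - ‖(x : E)‖) (by fun_prop)
    (fun x => by linarith [hB x]) (fun x => by linarith [norm_nonneg (x : E)])
    (f := fun x => φ (r x)) (fun x => hT _)
    (fun x z => (conv _ _ _ (hρ0 x) (hρ1 x) (hmle z (r x))).2.1)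
    (fun x z => (conv _ _ _ (hρ0 x) (hρ1 x) (hleM z (r x))).2.2.1)
    (fun x z => (hm0 z).trans (conv _ _ _ (hρ0 x) (hρ1 x) (hmle z (r x))).1)
    (fun x z => (conv _ _ _ (hρ0 x) (hρ1 x) (hleM z (r x))).2.2.2.trans (hM1 z))
    (fun x hx z => by simp [hτ x hx]) (fun x hx z => by simp [hτ x hx]) hδ
  refine ⟨Φ, hΦc, hΦT, fun u => ?_, fun x z c d hc hd => ?_⟩
  · have hu : ‖(u : E)‖ = 1 := mem_sphere_zero_iff_norm.1 u.2
    rw [hΦe _ (by simp [hu])]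
    exact congrArg φ (hr1 u)
  · obtain ⟨h1, h2⟩ := hΦb x z
    have k1 := (conv _ _ _ (hρ0 x) (hρ1 x) (hmle z (r x))).1
    have k2 := (conv _ _ _ (hρ0 x) (hρ1 x) (hleM z (r x))).2.2.2
    constructor
    · linarith [hlem z c hc]
    · linarith [hMle z d hd]

theorem transSet_sphere_extension_property
    (n : ℕ) (hn : 1 ≤ n) (ε : ℝ) (hε : 0 < ε)
    (φ : ↥(Metric.sphere (0 : EuclideanSpace ℝ (Fin n)) 1) → ↥TransSet)
    (hφ : Continuous φ)
    (C : Set ↥TransSet) (hC : IsCompact C) (hrange : Set.range φ ⊆ C) :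
    ∃ Φ : ↥(Metric.closedBall (0 : EuclideanSpace ℝ (Fin n)) 1) → ↥TransSet,
      Continuous Φ ∧
      (∀ x : ↥(Metric.sphere (0 : EuclideanSpace ℝ (Fin n)) 1),
        Φ ⟨(x : EuclideanSpace ℝ (Fin n)), Metric.sphere_subset_closedBall x.2⟩ = φ x) ∧
      (∀ A : Set ↥TransSet, Set.range φ ⊆ A → A ⊆ C →
        Metric.diam (Set.range Φ ∪ A) ≤ (1 + ε) * Metric.diam A) := by
  have : Nonempty (Fin n) := ⟨⟨0, hn⟩⟩
  have hne : Nonempty (Metric.sphere (0 : EuclideanSpace ℝ (Fin n)) 1) :=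
    (NormedSpace.sphere_nonempty.2 zero_le_one).to_subtype
  obtain ⟨u₀⟩ := id hne
  have hbA : ∀ A : Set ↥TransSet, A ⊆ C → Bornology.IsBounded A := fun A hA =>
    hC.isBounded.subset hA
  by_cases hd : Metric.diam (Set.range φ) = 0
  · -- The map `φ` is constant, and so must be its extension.
    have hconst : ∀ u, φ u = φ u₀ := fun u => dist_le_zero.1 <|
      (Metric.dist_le_diam_of_mem (hbA _ hrange) (Set.mem_range_self u)
        (Set.mem_range_self u₀)).trans_eq hd
    refine ⟨fun _ => φ u₀, continuous_const, fun x => (hconst x).symm, fun A hA hAC => ?_⟩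
    have hsub : Set.range (fun _ : Metric.closedBall (0 : EuclideanSpace ℝ (Fin n)) 1 => φ u₀) ∪ A
        = A := by
      refine Set.union_eq_self_of_subset_left ?_
      rintro _ ⟨_, rfl⟩
      exact hA (Set.mem_range_self u₀)
    rw [hsub]
    nlinarith [Metric.diam_nonneg (s := A)]
  have hd0 : 0 < Metric.diam (Set.range φ) := Metric.diam_nonneg.lt_of_ne' hd
  set δ := ε * Metric.diam (Set.range φ) / 2 with hδ
  obtain ⟨Φ, hΦc, hΦT, hΦe, hΦb⟩ := exists_filling (fun u => (φ u).1)
    (continuous_subtype_val.comp hφ) (fun u => (φ u).2) (δ := δ) (by positivity)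
  refine ⟨fun x => ⟨Φ x, hΦT x⟩, hΦc.subtype_mk _, fun u => Subtype.ext (hΦe u),
    fun A hA hAC => ?_⟩
  set D := Metric.diam A with hD
  have hDφ : Metric.diam (Set.range φ) ≤ D := Metric.diam_mono hA (hbA A hAC)
  have hD0 : 0 ≤ D := Metric.diam_nonneg
  have hδD : 2 * δ ≤ ε * D := by
    have := mul_le_mul_of_nonneg_left hDφ hε.le
    rw [hδ]; linarith
  have hδ0 : 0 < δ := by positivity
  have hval : ∀ f ∈ A, ∀ g ∈ A, ∀ z, |(f.1 z : ℝ) - g.1 z| ≤ D := by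
    intro f hf g hg z
    have h1 : dist f g ≤ D := Metric.dist_le_diam_of_mem (hbA A hAC) hf hg
    exact (ContinuousMap.dist_apply_le_dist (f := f.1) (g := g.1) z).trans h1
  have hφA : ∀ u, φ u ∈ A := fun u => hA (Set.mem_range_self u)
  -- Points of the filling stay within `D + δ` of `A`, because order intervals have extreme points.
  have hmix : ∀ x, ∀ a ∈ A, ∀ z, |(Φ x z : ℝ) - a.1 z| ≤ D + δ := by
    intro x a ha z
    obtain ⟨h1, h2⟩ := hΦb x z (a.1 z - D) (a.1 z + D)
      (fun u => by linarith [(abs_le.1 (hval _ (hφA u) a ha z)).1])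
      (fun u => by linarith [(abs_le.1 (hval _ (hφA u) a ha z)).2])
    rw [abs_le]; constructor <;> linarith
  have hΦΦ : ∀ x y z, |(Φ x z : ℝ) - Φ y z| ≤ D + 2 * δ := by
    intro x y z
    obtain ⟨h1, h2⟩ := hΦb x z (Φ y z - D - δ) (Φ y z + D + δ)
      (fun u => by linarith [(abs_le.1 (hmix y _ (hφA u) z)).2])
      (fun u => by linarith [(abs_le.1 (hmix y _ (hφA u) z)).1])
    rw [abs_le]; constructor <;> linarith
  have hto : ∀ f g : ↥TransSet, (∀ z, |(f.1 z : ℝ) - g.1 z| ≤ D + 2 * δ) →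
      dist f g ≤ (1 + ε) * D := by
    intro f g h
    refine le_trans ?_ (by linarith : D + 2 * δ ≤ (1 + ε) * D)
    exact (ContinuousMap.dist_le (f := f.1) (g := g.1) (by positivity)).2 h
  refine Metric.diam_le_of_forall_dist_le (by positivity) ?_
  rintro f (⟨x, rfl⟩ | hf) g (⟨y, rfl⟩ | hg)
  · exact hto _ _ (hΦΦ x y)
  · exact hto _ _ fun z => (hmix x g hg z).trans (by linarith)
  · exact hto _ _ fun z => (abs_sub_comm _ _).trans_le ((hmix y f hf z).trans (by linarith))
  · exact hto _ _ fun z => (hval f hf g hg z).trans (by linarith)
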